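/- Let p be an odd prime, G a finite powerful p-group, and i ≥ 1. Then the quotient group H = Ω_i(G^p) / (Ω_i(G^p))^{p²} is powerful, i.e., [H, H] ≤ H^p. -/

import Mathlib

/-!
The group `Ω_i(G^p)` is itself powerful, hence so is its quotient. A commutator `[x, y]` of two of
its elements lies in `(G^p)^p`, so it equals `g^p` for some `g` in `G^p`; with `x = a^p`, what has
to be shown is `[a^p, y] ^ p ^ (i - 1) = 1`, for then `g` lies in `Ω_i(G^p)`. This bound on orders
comes from two facts about a powerful `p`-group with `p` odd:

* (A) the elements of order dividing `p` are closed under products;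
* (S) if `x ^ p ^ (k + 1) = 1` and `y ^ p ^ k = 1`, then `x ^ p ^ k` and `y` commute.

Both are proved by a common induction on `|G|`, where the subgroup `T = ⟨y⟩ G^p` takes the place of
a maximal subgroup: it is powerful, it is normal, and it is proper unless `G` is cyclic, because
`G^p` consists of non-generators. Fact (A) in `T` shows that `y^p = 1` implies `[x, y]^p = 1`.

For (S), descend on `k`. Put `X = x ^ p ^ (k - 1)` and `u = [y, X]`. Then `u^p = 1`, by the previous
remark if `k = 1`, and by (S) in the quotient of `G` by `Ω_1(G^p)` if `k ≥ 2`. Hence `[X, u]` has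
order dividing `p`; since it lies in `G ^ p ^ (k + 1)`, it is `g ^ p ^ (k + 1)` for some `g`, so
(S) for `k + 1` makes it commute with `X` and `u`. The power formula in class two now gives
`y X^p y⁻¹ = (u X)^p = X^p`. Finally, if `x^p = y^p = 1`, then `[y, x] = d^p` has order dividing
`p`, so it commutes with `x` and `y` by (S) for `k = 1`, and the same power formula gives (A).

Dividing by `Ω_1(G)` repeatedly turns (A) and (S) into the corresponding statements for `p ^ i`: the
elements of order dividing `p ^ i` are closed under products, and `[a^p, y] ^ p ^ (i - 1) = 1`
whenever `a ^ p ^ (i + 1) = y ^ p ^ i = 1`.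
-/

/-- The subgroup generated by the `n`-th powers of the elements of `H`. -/
def subgroupPow {G : Type*} [Group G] (H : Subgroup G) (n : ℕ) : Subgroup G :=
  Subgroup.closure {x | ∃ h ∈ H, h ^ n = x}

/-- `Ω_i(H)`: the subgroup generated by the elements of `H` whose order divides `p ^ i`. -/
def omegaSubgroup {G : Type*} [Group G] (p i : ℕ) (H : Subgroup G) : Subgroup G :=
  Subgroup.closure {x | x ∈ H ∧ x ^ p ^ i = 1}

/-- A finite `p`-group `G` is powerful if `[G,G] ≤ G^p` when `p` is odd,
and `[G,G] ≤ G^4` when `p = 2`. -/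
def IsPowerful (p : ℕ) (G : Type*) [Group G] : Prop :=
  if p = 2 then commutator G ≤ subgroupPow (⊤ : Subgroup G) 4
  else commutator G ≤ subgroupPow (⊤ : Subgroup G) p

/-- The subgroup of `n`-th powers of the whole group is normal (indeed characteristic). -/
instance subgroupPow_top_normal {G : Type*} [Group G] (n : ℕ) :
    (subgroupPow (⊤ : Subgroup G) n).Normal := by
  constructor
  intro x hx g
  have key : Subgroup.map (MulAut.conj g).toMonoidHom (subgroupPow (⊤ : Subgroup G) n)
      ≤ subgroupPow (⊤ : Subgroup G) n := by
    rw [subgroupPow, MonoidHom.map_closure]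
    apply Subgroup.closure_le _ |>.mpr
    rintro y ⟨z, ⟨h, -, rfl⟩, rfl⟩
    exact Subgroup.subset_closure ⟨(MulAut.conj g) h, trivial, by
      simp [((MulAut.conj g).toMonoidHom.map_pow h n).symm]⟩
  have hmem : (MulAut.conj g) x ∈
      Subgroup.map (MulAut.conj g).toMonoidHom (subgroupPow (⊤ : Subgroup G) n) :=
    Subgroup.mem_map_of_mem _ hx
  simpa [MulAut.conj_apply] using key hmem

/-- A powerfully central chain `{1} = H 0 ≤ H 1 ≤ ⋯ ≤ H n = G` of length `n`:
`[H (k+1), G] ≤ (H k)^p` for all `k < n`. -/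
def IsPowerfullyCentralChain (p : ℕ) {G : Type*} [Group G] (n : ℕ) (H : ℕ → Subgroup G) : Prop :=
  H 0 = ⊥ ∧ H n = ⊤ ∧ (∀ k, k < n → H k ≤ H (k + 1)) ∧
    ∀ k, k < n → ⁅H (k + 1), (⊤ : Subgroup G)⁆ ≤ subgroupPow (H k) p

/-- A group is powerfully nilpotent if it is powerful and admits a powerfully central chain. -/
def IsPowerfullyNilpotent (p : ℕ) (G : Type*) [Group G] : Prop :=
  IsPowerful p G ∧ ∃ (n : ℕ) (H : ℕ → Subgroup G), IsPowerfullyCentralChain p n H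

/-- The powerful nilpotency class: the least possible length of a powerfully central chain. -/
noncomputable def powerfulNilpotencyClass (p : ℕ) (G : Type*) [Group G] : ℕ :=
  sInf {n | ∃ H : ℕ → Subgroup G, IsPowerfullyCentralChain p n H}

open scoped commutatorElement

universe u

/-! ### Power subgroups and omega subgroups -/

section Subgroups

variable {G G' : Type*} [Group G] [Group G'] {H K : Subgroup G} {m n : ℕ}

theorem pow_mem_subgroupPow {x : G} (hx : x ∈ H) : x ^ n ∈ subgroupPow H n :=
  Subgroup.subset_closure ⟨x, hx, rfl⟩

theorem subgroupPow_le_iff : subgroupPow H n ≤ K ↔ ∀ x ∈ H, x ^ n ∈ K := by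
  simp only [subgroupPow, Subgroup.closure_le, Set.subset_def, Set.mem_ofPred_eq,
    forall_exists_index, and_imp, forall_apply_eq_imp_iff₂, SetLike.mem_coe]

theorem subgroupPow_mono (h : H ≤ K) : subgroupPow H n ≤ subgroupPow K n :=
  subgroupPow_le_iff.mpr fun _ hx => pow_mem_subgroupPow (h hx)

theorem subgroupPow_le_self : subgroupPow H n ≤ H :=
  subgroupPow_le_iff.mpr fun _ hx => pow_mem hx n

theorem subgroupPow_one : subgroupPow H 1 = H :=
  le_antisymm subgroupPow_le_self fun x hx => pow_one x ▸ pow_mem_subgroupPow hx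

theorem map_subgroupPow (f : G →* G') : (subgroupPow H n).map f = subgroupPow (H.map f) n := by
  apply le_antisymm
  · rw [Subgroup.map_le_iff_le_comap, subgroupPow_le_iff]
    intro x hx
    rw [Subgroup.mem_comap, map_pow]
    exact pow_mem_subgroupPow (Subgroup.mem_map_of_mem f hx)
  · rw [subgroupPow_le_iff]
    rintro _ ⟨x, hx, rfl⟩
    rw [← map_pow]
    exact Subgroup.mem_map_of_mem f (pow_mem_subgroupPow hx)

theorem map_subtype_subgroupPow_top :
    (subgroupPow (⊤ : Subgroup H) n).map H.subtype = subgroupPow H n := by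
  rw [map_subgroupPow, ← MonoidHom.range_eq_map, Subgroup.range_subtype]

-- The low priority leaves `subgroupPow_top_normal` as the instance found for `⊤`.
instance (priority := 100) subgroupPow_normal [hH : H.Normal] : (subgroupPow H n).Normal := by
  refine ⟨fun x hx g => ?_⟩
  have h : subgroupPow H n ≤ (subgroupPow H n).comap (MulAut.conj g).toMonoidHom := by
    rw [subgroupPow_le_iff]
    intro y hy
    simpa [conj_pow] using pow_mem_subgroupPow (n := n) (hH.conj_mem y hy g)
  simpa using h hx

theorem subgroupPow_subgroupPow (h : ∀ x ∈ subgroupPow H m, ∃ g ∈ H, g ^ m = x) :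
    subgroupPow (subgroupPow H m) n = subgroupPow H (m * n) := by
  apply le_antisymm <;> rw [subgroupPow_le_iff]
  · intro x hx
    obtain ⟨g, hg, rfl⟩ := h x hx
    rw [← pow_mul]
    exact pow_mem_subgroupPow hg
  · intro g hg
    rw [pow_mul]
    exact pow_mem_subgroupPow (pow_mem_subgroupPow hg)

theorem exists_pow_eq_of_mem_subgroupPow_top (h : ∀ a b : G, (a * b) ^ n = a ^ n * b ^ n)
    {x : G} (hx : x ∈ subgroupPow (⊤ : Subgroup G) n) : ∃ g, g ^ n = x := by
  induction hx using Subgroup.closure_induction with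
  | mem x hx => obtain ⟨g, -, rfl⟩ := hx; exact ⟨g, rfl⟩
  | one => exact ⟨1, one_pow n⟩
  | mul x y _ _ ihx ihy =>
    obtain ⟨a, rfl⟩ := ihx
    obtain ⟨b, rfl⟩ := ihy
    exact ⟨a * b, h a b⟩
  | inv x _ ih =>
    obtain ⟨a, rfl⟩ := ih
    exact ⟨a⁻¹, inv_pow a n⟩

variable {p i : ℕ}

theorem mem_omegaSubgroup_of_pow_eq_one {x : G} (hx : x ∈ H) (hxi : x ^ p ^ i = 1) :
    x ∈ omegaSubgroup p i H :=
  Subgroup.subset_closure ⟨hx, hxi⟩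

theorem omegaSubgroup_le : omegaSubgroup p i H ≤ H :=
  (Subgroup.closure_le _).mpr fun _ hx => hx.1

instance omegaSubgroup_normal [hH : H.Normal] : (omegaSubgroup p i H).Normal := by
  refine ⟨fun x hx g => ?_⟩
  have h : omegaSubgroup p i H ≤ (omegaSubgroup p i H).comap (MulAut.conj g).toMonoidHom := by
    rw [omegaSubgroup, Subgroup.closure_le]
    rintro y ⟨hy, hyi⟩
    exact mem_omegaSubgroup_of_pow_eq_one (hH.conj_mem y hy g) (by simp [hyi])
  simpa using h hx

theorem mem_omegaSubgroup_iff
    (h : ∀ a ∈ H, ∀ b ∈ H, a ^ p ^ i = 1 → b ^ p ^ i = 1 → (a * b) ^ p ^ i = 1) {x : G} :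
    x ∈ omegaSubgroup p i H ↔ x ∈ H ∧ x ^ p ^ i = 1 := by
  refine ⟨fun hx => ⟨omegaSubgroup_le hx, ?_⟩,
    fun hx => mem_omegaSubgroup_of_pow_eq_one hx.1 hx.2⟩
  induction hx using Subgroup.closure_induction with
  | mem x hx => exact hx.2
  | one => exact one_pow _
  | mul x y hx hy ihx ihy => exact h x (omegaSubgroup_le hx) y (omegaSubgroup_le hy) ihx ihy
  | inv x _ ih => rw [inv_pow, ih, inv_one]

theorem omegaSubgroup_one_ne_bot [Fact p.Prime] (hG : IsPGroup p G) (hH : H ≠ ⊥) :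
    omegaSubgroup p 1 H ≠ ⊥ := by
  obtain ⟨x, hx, hx1⟩ := H.bot_or_exists_ne_one.resolve_left hH
  have hp : orderOf (x ^ (orderOf x / p)) = p :=
    orderOf_pow_orderOf_div
      (hG.isOfFinOrder (NeZero.ne p) x).orderOf_pos.ne' (hG.dvd_orderOf hx1)
  intro hbot
  have hmem : x ^ (orderOf x / p) ∈ omegaSubgroup p 1 H :=
    mem_omegaSubgroup_of_pow_eq_one (pow_mem hx _)
      (by rw [pow_one, ← orderOf_dvd_iff_pow_eq_one, hp])
  rw [hbot, Subgroup.mem_bot, ← orderOf_eq_one_iff, hp] at hmem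
  exact (Fact.out : p.Prime).one_lt.ne' hmem

end Subgroups

/-! ### The power formula in class two -/

section ClassTwo

variable {G : Type*} [Group G]

theorem pow_mul_eq_of_commute_commutator {x u : G} (hx : Commute ⁅x, u⁆ x) (n : ℕ) :
    x ^ n * u = ⁅x, u⁆ ^ n * (u * x ^ n) := by
  induction n with
  | zero => simp
  | succ n ih =>
    calc x ^ (n + 1) * u = x * ⁅x, u⁆ ^ n * (u * x ^ n) := by
          rw [pow_succ', mul_assoc, ih, mul_assoc]
      _ = ⁅x, u⁆ ^ n * (x * u) * x ^ n := by
          rw [(hx.pow_left n).symm.eq]; simp only [mul_assoc]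
      _ = ⁅x, u⁆ ^ n * (⁅x, u⁆ * (u * x)) * x ^ n := by simp [commutatorElement_def, mul_assoc]
      _ = ⁅x, u⁆ ^ (n + 1) * (u * x ^ (n + 1)) := by
          rw [pow_succ, pow_succ']; simp only [mul_assoc]

theorem mul_pow_of_commute_commutator {x u : G} (hx : Commute ⁅x, u⁆ x) (hu : Commute ⁅x, u⁆ u)
    (n : ℕ) : (u * x) ^ n = u ^ n * x ^ n * ⁅x, u⁆ ^ n.choose 2 := by
  induction n with
  | zero => simp
  | succ n ih =>
    have hcomm (k : ℕ) : Commute (⁅x, u⁆ ^ k) (u * x ^ n * x) :=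
      ((hu.mul_right (hx.pow_right n)).mul_right hx).pow_left k
    calc (u * x) ^ (n + 1) = u ^ n * x ^ n * (⁅x, u⁆ ^ n.choose 2 * (u * x)) := by
          rw [pow_succ, ih, mul_assoc]
      _ = u ^ n * (x ^ n * u) * x * ⁅x, u⁆ ^ n.choose 2 := by
          rw [((hu.mul_right hx).pow_left _).eq]; simp only [mul_assoc]
      _ = u ^ n * (⁅x, u⁆ ^ n * (u * x ^ n * x)) * ⁅x, u⁆ ^ n.choose 2 := by
          rw [pow_mul_eq_of_commute_commutator hx]; simp only [mul_assoc]
      _ = u ^ (n + 1) * x ^ (n + 1) * ⁅x, u⁆ ^ (n + 1).choose 2 := by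
          rw [(hcomm n).eq, Nat.choose_succ_succ' n 1, Nat.choose_one_right, pow_add ⁅x, u⁆,
            pow_succ u, pow_succ x]
          simp only [mul_assoc]

variable {p : ℕ} [hp : Fact p.Prime] {x u y : G}

theorem mul_pow_prime_of_commute_commutator (hp2 : p ≠ 2) (hx : Commute ⁅x, u⁆ x)
    (hu : Commute ⁅x, u⁆ u) (hxu : ⁅x, u⁆ ^ p = 1) : (u * x) ^ p = u ^ p * x ^ p := by
  obtain ⟨k, hk⟩ : p ∣ p.choose 2 :=
    hp.out.dvd_choose_self two_ne_zero (hp.out.two_le.lt_of_ne' hp2)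
  rw [mul_pow_of_commute_commutator hx hu, hk, pow_mul, hxu, one_pow, mul_one]

-- Conjugation by `y` sends `x ^ p` to `(⁅y, x⁆ * x) ^ p`, which is `⁅y, x⁆ ^ p * x ^ p`.
theorem commute_pow_prime_of_commutator_pow_eq_one (hp2 : p ≠ 2)
    (hx : Commute ⁅x, ⁅y, x⁆⁆ x) (hyx : Commute ⁅x, ⁅y, x⁆⁆ ⁅y, x⁆)
    (hxyx : ⁅x, ⁅y, x⁆⁆ ^ p = 1) (hpow : ⁅y, x⁆ ^ p = 1) :
    Commute y (x ^ p) := by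
  have h := mul_pow_prime_of_commute_commutator hp2 hx hyx hxyx
  rw [hpow, one_mul, ← conj_eq_commutatorElement_mul, MulAut.conj_apply, conj_pow] at h
  exact mul_inv_eq_iff_eq_mul.mp h

end ClassTwo

/-! ### Powerfully embedded subgroups -/

section Nilpotent

variable {G : Type*} [Group G] {K L : Subgroup G}

theorem commutatorElement_mem_iff_commute_mk [K.Normal] {a b : G} :
    ⁅a, b⁆ ∈ K ↔ Commute (a : G ⧸ K) (b : G ⧸ K) := by
  rw [← commutatorElement_eq_one_iff_commute, ← QuotientGroup.eq_one_iff]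
  exact Iff.rfl

theorem eq_bot_of_le_commutator [Group.IsNilpotent G] (h : L ≤ ⁅L, (⊤ : Subgroup G)⁆) :
    L = ⊥ := by
  have hL (n : ℕ) : L ≤ (⊤ : Subgroup G).lowerCentralSeries n := by
    induction n with
    | zero => exact le_top
    | succ n ih => exact h.trans (Subgroup.commutator_mono ih le_rfl)
  obtain ⟨n, hn⟩ := Subgroup.nilpotent_iff_lowerCentralSeries.mp ‹Group.IsNilpotent G›
  exact le_bot_iff.mp (hn ▸ hL n)

theorem le_of_le_commutator_sup [Group.IsNilpotent G] [K.Normal]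
    (h : L ≤ ⁅L, (⊤ : Subgroup G)⁆ ⊔ K) : L ≤ K := by
  have hL : L.map (QuotientGroup.mk' K) ≤ ⁅L.map (QuotientGroup.mk' K), ⊤⁆ := by
    have hmap := Subgroup.map_mono (f := QuotientGroup.mk' K) h
    rwa [Subgroup.map_sup, Subgroup.map_commutator, QuotientGroup.map_mk'_self, sup_bot_eq,
      Subgroup.map_top_of_surjective _ (QuotientGroup.mk'_surjective K)] at hmap
  rw [← QuotientGroup.ker_mk' K, ← (Subgroup.map_eq_bot_iff L)]
  exact eq_bot_of_le_commutator hL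

end Nilpotent

/-- A subgroup `N` of a `p`-group `G`, `p` odd, is powerfully embedded if `[N,G] ≤ N^p`; this is the
relative form of powerfulness that passes from `N` to `N^p`. The case `p = 2`, where `N^4` would
replace `N^p`, is not covered. -/
def IsPowerfullyEmbedded (p : ℕ) {G : Type*} [Group G] (N : Subgroup G) : Prop :=
  ⁅N, (⊤ : Subgroup G)⁆ ≤ subgroupPow N p

section PowerfullyEmbedded

variable {p : ℕ} {G G' : Type*} [Group G] [Group G'] {N : Subgroup G}

theorem isPowerful_iff_isPowerfullyEmbedded_top (hp2 : p ≠ 2) :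
    IsPowerful p G ↔ IsPowerfullyEmbedded p (⊤ : Subgroup G) := by
  rw [IsPowerful, if_neg hp2]
  exact Iff.rfl

theorem isPowerful_subgroup_iff (hp2 : p ≠ 2) : IsPowerful p N ↔ ⁅N, N⁆ ≤ subgroupPow N p := by
  rw [IsPowerful, if_neg hp2, ← Subgroup.map_subtype_le_map_subtype,
    Subgroup.map_subtype_commutator, map_subtype_subgroupPow_top]

namespace IsPowerfullyEmbedded

theorem normal (hN : IsPowerfullyEmbedded p N) : N.Normal :=
  Subgroup.commutator_top_right_le_iff.mp (hN.trans subgroupPow_le_self)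

theorem commutator_mem_left (hN : IsPowerfullyEmbedded p N) {x : G} (hx : x ∈ N) (g : G) :
    ⁅x, g⁆ ∈ subgroupPow N p :=
  hN (Subgroup.commutator_mem_commutator hx (Subgroup.mem_top g))

theorem commutator_mem_right (hN : IsPowerfullyEmbedded p N) {x : G} (hx : x ∈ N) (g : G) :
    ⁅g, x⁆ ∈ subgroupPow N p :=
  commutatorElement_inv x g ▸ inv_mem (hN.commutator_mem_left hx g)

theorem map (hN : IsPowerfullyEmbedded p N) {f : G →* G'} (hf : Function.Surjective f) :
    IsPowerfullyEmbedded p (N.map f) := by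
  have h := Subgroup.map_mono (f := f) hN
  rwa [Subgroup.map_commutator, Subgroup.map_top_of_surjective f hf, map_subgroupPow] at h

theorem isPowerful (hN : IsPowerfullyEmbedded p N) (hp2 : p ≠ 2) : IsPowerful p N :=
  (isPowerful_subgroup_iff hp2).mpr ((Subgroup.commutator_mono le_rfl le_top).trans hN)

-- Modulo `N ^ p` the subgroup `N` is central, hence `⟨y⟩ N` is abelian.
theorem isPowerful_zpowers_sup (hN : IsPowerfullyEmbedded p N) (hp2 : p ≠ 2) (y : G) :
    IsPowerful p ↥(Subgroup.zpowers y ⊔ N) := by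
  have := hN.normal
  have hcentral {s : G} (hs : s ∈ N) (g : G ⧸ subgroupPow N p) :
      Commute (s : G ⧸ subgroupPow N p) g := by
    induction g using QuotientGroup.induction_on with
    | H g => exact commutatorElement_mem_iff_commute_mk.mp (hN.commutator_mem_left hs g)
  rw [isPowerful_subgroup_iff hp2]
  refine le_trans ?_ (subgroupPow_mono (le_sup_right (a := Subgroup.zpowers y)))
  rw [Subgroup.commutator_le]
  intro a ha b hb
  rw [Subgroup.mem_sup_of_normal_right] at ha hb
  obtain ⟨_, ⟨m, rfl⟩, s, hs, rfl⟩ := ha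
  obtain ⟨_, ⟨n, rfl⟩, t, ht, rfl⟩ := hb
  rw [commutatorElement_mem_iff_commute_mk, QuotientGroup.mk_mul, QuotientGroup.mk_mul]
  have hy : Commute ((y ^ m : G) : G ⧸ subgroupPow N p) ((y ^ n : G) : G ⧸ _) :=
    ((Commute.refl y).zpow_zpow m n).map (QuotientGroup.mk' _)
  exact (hy.mul_right (hcentral ht _).symm).mul_left (hcentral hs _)

theorem subgroupPow_le_center [Fact p.Prime] (hp2 : p ≠ 2) (hN : IsPowerfullyEmbedded p N)
    (hpp : ∀ x ∈ subgroupPow N p, x ^ p = 1)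
    (hcenter : ⁅subgroupPow N p, (⊤ : Subgroup G)⁆ ≤ Subgroup.center G) :
    subgroupPow N p ≤ Subgroup.center G := by
  rw [subgroupPow_le_iff]
  intro x hx
  rw [Subgroup.mem_center_iff]
  intro g
  have hgx : ⁅g, x⁆ ∈ subgroupPow N p := hN.commutator_mem_right hx g
  have hxgx : ⁅x, ⁅g, x⁆⁆ ∈ ⁅subgroupPow N p, (⊤ : Subgroup G)⁆ :=
    commutatorElement_inv ⁅g, x⁆ x ▸
      inv_mem (Subgroup.commutator_mem_commutator hgx (Subgroup.mem_top x))
  have hcomm (z : G) : Commute ⁅x, ⁅g, x⁆⁆ z :=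
    (Subgroup.mem_center_iff.mp (hcenter hxgx) z).symm
  have hxgxN : ⁅x, ⁅g, x⁆⁆ ∈ subgroupPow N p :=
    hN.commutator_mem_left hx ⁅g, x⁆
  exact commute_pow_prime_of_commutator_pow_eq_one hp2 (hcomm _) (hcomm _) (hpp _ hxgxN)
    (hpp _ hgx)

-- The inclusion may be checked modulo `[N ^ p, G, G]`, where `[N ^ p, G]` is central.
theorem pow [Fact p.Prime] (hp2 : p ≠ 2) [Group.IsNilpotent G]
    (hN : IsPowerfullyEmbedded p N) : IsPowerfullyEmbedded p (subgroupPow N p) := by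
  have := hN.normal
  apply le_of_le_commutator_sup
  set L := ⁅subgroupPow N p, (⊤ : Subgroup G)⁆
  set J := ⁅L, (⊤ : Subgroup G)⁆ ⊔ subgroupPow (subgroupPow N p) p
  have hsurj := QuotientGroup.mk'_surjective J
  have hmap : (subgroupPow N p).map (QuotientGroup.mk' J) =
      subgroupPow (N.map (QuotientGroup.mk' J)) p := map_subgroupPow _
  have hle := (hN.map hsurj).subgroupPow_le_center hp2 ?_ ?_
  · rw [← hmap] at hle
    rw [Subgroup.commutator_le]
    intro x hx g _
    rw [commutatorElement_mem_iff_commute_mk]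
    exact (Subgroup.mem_center_iff.mp (hle (Subgroup.mem_map_of_mem _ hx)) _).symm
  · rw [← hmap]
    rintro _ ⟨x, hx, rfl⟩
    rw [← map_pow]
    exact (QuotientGroup.eq_one_iff _).mpr (Subgroup.mem_sup_right (pow_mem_subgroupPow hx))
  · rw [← hmap, ← Subgroup.map_top_of_surjective _ hsurj, ← Subgroup.map_commutator]
    rintro _ ⟨x, hx, rfl⟩
    rw [Subgroup.mem_center_iff]
    intro g
    obtain ⟨g, rfl⟩ := hsurj g
    exact (commutatorElement_mem_iff_commute_mk.mp (Subgroup.mem_sup_left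
      (Subgroup.commutator_mem_commutator hx (Subgroup.mem_top g)))).symm

end IsPowerfullyEmbedded

theorem IsPowerful.of_surjective (hp2 : p ≠ 2) (hG : IsPowerful p G) (f : G →* G')
    (hf : Function.Surjective f) : IsPowerful p G' := by
  rw [isPowerful_iff_isPowerfullyEmbedded_top hp2] at hG ⊢
  exact Subgroup.map_top_of_surjective f hf ▸ hG.map hf

end PowerfullyEmbedded

/-! ### The induction principle for powerful groups -/

theorem card_lt_card_of_ne_top {G : Type*} [Group G] [Finite G] {H : Subgroup G} (hH : H ≠ ⊤) :
    Nat.card H < Nat.card G :=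
  H.card_le_card_group.lt_of_ne (mt H.eq_top_of_card_eq hH)

section Frattini

variable {p : ℕ} [hp : Fact p.Prime] {G : Type*} [Group G] [Finite G]

theorem index_eq_of_isCoatom (hG : IsPGroup p G) {K : Subgroup G} (hK : IsCoatom K) :
    K.index = p := by
  obtain ⟨N, hN⟩ := IsPGroup.iff_card.mp hG
  obtain ⟨m, hm⟩ := IsPGroup.iff_card.mp (hG.to_subgroup K)
  have hmN : m < N := by
    rw [← Nat.pow_lt_pow_iff_right hp.out.one_lt, ← hm, ← hN]
    exact card_lt_card_of_ne_top hK.1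
  obtain ⟨L, hL, hKL⟩ := Sylow.exists_subgroup_card_pow_succ (hN ▸ pow_dvd_pow p hmN) hm
  have hLtop : L = ⊤ := hK.2 L <| hKL.lt_of_ne <| by
    rintro rfl
    exact (Nat.pow_lt_pow_succ hp.out.one_lt).ne (hm.symm.trans hL)
  have hcard : p ^ m * K.index = p ^ m * p := by
    rw [← hm, K.card_mul_index, hm, ← pow_succ, ← hL, hLtop, Subgroup.card_top]
  exact Nat.eq_of_mul_eq_mul_left (pow_pos hp.out.pos m) hcard

theorem subgroupPow_top_le_frattini (hG : IsPGroup p G) :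
    subgroupPow (⊤ : Subgroup G) p ≤ frattini G := by
  have := hG.isNilpotent
  refine le_iInf₂ fun K hK => subgroupPow_le_iff.mpr fun x _ => ?_
  have := Subgroup.NormalizerCondition.normal_of_coatom K
    Group.normalizerCondition_of_isNilpotent hK
  exact index_eq_of_isCoatom hG hK ▸ K.pow_index_mem x

theorem isMulCommutative_of_zpowers_sup_eq_top (hG : IsPGroup p G) {y : G}
    (h : Subgroup.zpowers y ⊔ subgroupPow (⊤ : Subgroup G) p = ⊤) : IsMulCommutative G := by
  have hy : Subgroup.zpowers y = ⊤ := frattini_nongenerating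
    (top_le_iff.mp (h ▸ sup_le_sup_left (subgroupPow_top_le_frattini hG) _))
  have := isCyclic_iff_exists_zpowers_eq_top.mpr ⟨y, hy⟩
  exact IsCyclic.isMulCommutative

end Frattini

theorem IsPowerful.induction {p : ℕ} [Fact p.Prime] (hp2 : p ≠ 2)
    {C : ∀ (G : Type u) [Group G], Prop}
    (comm : ∀ (G : Type u) [Group G], IsMulCommutative G → C G)
    (step : ∀ (G : Type u) [Group G] [Finite G], IsPGroup p G → IsPowerful p G →
      ¬ IsMulCommutative G →
      (∀ y : G, C ↥(Subgroup.zpowers y ⊔ subgroupPow (⊤ : Subgroup G) p)) →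
      (∀ (M : Subgroup G) [M.Normal], M ≠ ⊥ → C (G ⧸ M)) → C G)
    (G : Type u) [Group G] [Finite G] (hG : IsPGroup p G) (hpow : IsPowerful p G) : C G := by
  induction hn : Nat.card G using Nat.strong_induction_on generalizing G with
  | _ n ih =>
    subst hn
    by_cases hcomm : IsMulCommutative G
    · exact comm G hcomm
    have := hG.isNilpotent
    refine step G hG hpow hcomm (fun y => ?_) fun M _ hM => ?_
    · have hne : Subgroup.zpowers y ⊔ subgroupPow (⊤ : Subgroup G) p ≠ ⊤ :=
        fun h => hcomm (isMulCommutative_of_zpowers_sup_eq_top hG h)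
      exact ih _ (card_lt_card_of_ne_top hne) _ (hG.to_subgroup _)
        (((isPowerful_iff_isPowerfullyEmbedded_top hp2).mp hpow).pow hp2
          |>.isPowerful_zpowers_sup hp2 y) rfl
    · have hlt : Nat.card (G ⧸ M) < Nat.card G := by
        rw [M.card_eq_card_quotient_mul_card_subgroup]
        exact lt_mul_of_one_lt_right Nat.card_pos (M.one_lt_card_iff_ne_bot.mpr hM)
      exact ih _ hlt _ (hG.to_quotient M)
        (hpow.of_surjective hp2 _ (QuotientGroup.mk'_surjective M)) rfl

/-! ### Elements of the power subgroups -/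

section Powers

variable {p : ℕ} [Fact p.Prime]

theorem IsPowerful.mul_pow {G : Type*} [Group G] [Group.IsNilpotent G] (hp2 : p ≠ 2)
    (hpow : IsPowerful p G) (hpp : subgroupPow (subgroupPow (⊤ : Subgroup G) p) p = ⊥)
    (a b : G) : (a * b) ^ p = a ^ p * b ^ p := by
  have hG := (isPowerful_iff_isPowerfullyEmbedded_top hp2).mp hpow
  have hmem : ⁅b, a⁆ ∈ subgroupPow (⊤ : Subgroup G) p := hG.commutator_mem_left trivial a
  have hcomm (g : G) : Commute ⁅b, a⁆ g := by
    rw [← commutatorElement_eq_one_iff_commute, ← Subgroup.mem_bot, ← hpp]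
    exact (hG.pow hp2).commutator_mem_left hmem g
  refine mul_pow_prime_of_commute_commutator hp2 (hcomm b) (hcomm a) ?_
  rw [← Subgroup.mem_bot, ← hpp]
  exact pow_mem_subgroupPow hmem

theorem IsPowerful.exists_pow_mul_eq {G : Type*} [Group G] [Group.IsNilpotent G] (hp2 : p ≠ 2)
    (hpow : IsPowerful p G) {x : G} (hx : x ∈ subgroupPow (⊤ : Subgroup G) p) :
    ∃ g, ∃ v ∈ subgroupPow (subgroupPow (⊤ : Subgroup G) p) p, g ^ p * v = x := by
  set K := subgroupPow (subgroupPow (⊤ : Subgroup G) p) p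
  have hsurj := QuotientGroup.mk'_surjective K
  have hK : subgroupPow (subgroupPow (⊤ : Subgroup (G ⧸ K)) p) p = ⊥ := by
    rw [← Subgroup.map_top_of_surjective _ hsurj, ← map_subgroupPow, ← map_subgroupPow,
      QuotientGroup.map_mk'_self]
  have hxK : QuotientGroup.mk' K x ∈ subgroupPow (⊤ : Subgroup (G ⧸ K)) p := by
    rw [← Subgroup.map_top_of_surjective _ hsurj, ← map_subgroupPow]
    exact Subgroup.mem_map_of_mem _ hx
  obtain ⟨g', hg'⟩ := exists_pow_eq_of_mem_subgroupPow_top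
    ((hpow.of_surjective hp2 _ hsurj).mul_pow hp2 hK) hxK
  obtain ⟨g, rfl⟩ := hsurj g'
  exact ⟨g, (g ^ p)⁻¹ * x, QuotientGroup.eq.mp hg', mul_inv_cancel_left _ _⟩

-- If `x = g ^ p * v` with `v ∈ (G ^ p) ^ p`, then `x ∈ T ^ p` for the subgroup `T = ⟨g⟩ G ^ p`.
theorem IsPowerful.exists_pow_eq {G : Type u} [Group G] [Finite G] (hp2 : p ≠ 2)
    (hG : IsPGroup p G) (hpow : IsPowerful p G) :
    ∀ x ∈ subgroupPow (⊤ : Subgroup G) p, ∃ g, g ^ p = x := by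
  refine IsPowerful.induction hp2
    (C := fun G _ => ∀ x ∈ subgroupPow (⊤ : Subgroup G) p, ∃ g, g ^ p = x)
    (fun G _ hcomm x hx => ?_) (fun G _ _ hG hpow _ hsub _ x hx => ?_) G hG hpow
  · exact exists_pow_eq_of_mem_subgroupPow_top
      (fun a b => (show Commute a b from mul_comm' a b).mul_pow p) hx
  · have := hG.isNilpotent
    obtain ⟨g, v, hv, rfl⟩ := hpow.exists_pow_mul_eq hp2 hx
    set T := Subgroup.zpowers g ⊔ subgroupPow (⊤ : Subgroup G) p
    have hxT : g ^ p * v ∈ subgroupPow T p :=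
      mul_mem (pow_mem_subgroupPow (Subgroup.mem_sup_left (Subgroup.mem_zpowers g)))
        (subgroupPow_mono le_sup_right hv)
    rw [← map_subtype_subgroupPow_top] at hxT
    obtain ⟨z, hz, hzx⟩ := hxT
    obtain ⟨w, rfl⟩ := hsub g z hz
    exact ⟨w, by rw [← hzx, map_pow, Subgroup.subtype_apply]⟩

namespace IsPowerfullyEmbedded

variable {G : Type u} [Group G] [Finite G] {N : Subgroup G}

theorem exists_pow_eq (hp2 : p ≠ 2) (hG : IsPGroup p G) (hN : IsPowerfullyEmbedded p N) {x : G}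
    (hx : x ∈ subgroupPow N p) : ∃ g ∈ N, g ^ p = x := by
  rw [← map_subtype_subgroupPow_top] at hx
  obtain ⟨z, hz, rfl⟩ := hx
  obtain ⟨w, rfl⟩ := (hN.isPowerful hp2).exists_pow_eq hp2 (hG.to_subgroup N) z hz
  exact ⟨w, w.2, rfl⟩

theorem prime_pow_and_exists_pow_eq (hp2 : p ≠ 2) (hG : IsPGroup p G)
    (hN : IsPowerfullyEmbedded p N) (k : ℕ) :
    IsPowerfullyEmbedded p (subgroupPow N (p ^ k)) ∧
      ∀ x ∈ subgroupPow N (p ^ k), ∃ g ∈ N, g ^ p ^ k = x := by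
  have := hG.isNilpotent
  induction k with
  | zero => simpa [subgroupPow_one] using hN
  | succ k ih =>
    rw [pow_succ, ← subgroupPow_subgroupPow ih.2]
    refine ⟨ih.1.pow hp2, fun x hx => ?_⟩
    obtain ⟨z, hz, rfl⟩ := ih.1.exists_pow_eq hp2 hG hx
    obtain ⟨g, hg, rfl⟩ := ih.2 z hz
    exact ⟨g, hg, pow_mul g (p ^ k) p⟩

theorem exists_prime_pow_eq (hp2 : p ≠ 2) (hG : IsPGroup p G) (hN : IsPowerfullyEmbedded p N)
    {k : ℕ} {x : G} (hx : x ∈ subgroupPow N (p ^ k)) : ∃ g ∈ N, g ^ p ^ k = x :=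
  (hN.prime_pow_and_exists_pow_eq hp2 hG k).2 x hx

theorem commutator_mem_subgroupPow (hp2 : p ≠ 2) (hG : IsPGroup p G)
    (hN : IsPowerfullyEmbedded p N) {k : ℕ} {x : G} (hx : x ∈ subgroupPow N (p ^ k)) (g : G) :
    ⁅g, x⁆ ∈ subgroupPow N (p ^ (k + 1)) := by
  have h := hN.prime_pow_and_exists_pow_eq hp2 hG k
  rw [pow_succ, ← subgroupPow_subgroupPow h.2]
  exact h.1.commutator_mem_right hx g

end IsPowerfullyEmbedded

end Powers

/-! ### Elements of order dividing `p` -/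

/-- Regularity of the torsion of a `p`-group: the elements of order dividing `p` are closed under
products, and `x ^ p ^ k` commutes with `y` as soon as the orders of `x` and `y` divide
`p ^ (k + 1)` and `p ^ k`. The two properties of a powerful `p`-group, `p` odd, have to be proved
by a common induction on the order of the group. -/
structure HasRegularTorsion (p : ℕ) (G : Type*) [Group G] : Prop where
  mul_pow_eq_one : ∀ x y : G, x ^ p = 1 → y ^ p = 1 → (x * y) ^ p = 1
  commute_pow : ∀ (k : ℕ) (x y : G), x ^ p ^ (k + 1) = 1 → y ^ p ^ k = 1 → Commute y (x ^ p ^ k)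

section RegularTorsion

variable {p : ℕ}

namespace HasRegularTorsion

variable {G : Type*} [Group G]

theorem of_isMulCommutative [IsMulCommutative G] : HasRegularTorsion p G where
  mul_pow_eq_one x y hx hy := by
    rw [(show Commute x y from mul_comm' x y).mul_pow, hx, hy, one_mul]
  commute_pow _ _ _ _ _ := mul_comm' _ _

variable {T : Subgroup G}

theorem mul_pow_eq_one_of_mem (hT : HasRegularTorsion p T) {x y : G} (hx : x ∈ T) (hy : y ∈ T)
    (hxp : x ^ p = 1) (hyp : y ^ p = 1) : (x * y) ^ p = 1 :=
  congrArg Subtype.val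
    (hT.mul_pow_eq_one ⟨x, hx⟩ ⟨y, hy⟩ (Subtype.ext hxp) (Subtype.ext hyp))

theorem commutator_pow_eq_one [hTn : T.Normal] (hT : HasRegularTorsion p T) {y : G} (hy : y ∈ T)
    (hyp : y ^ p = 1) (x : G) : ⁅x, y⁆ ^ p = 1 :=
  hT.mul_pow_eq_one_of_mem (hTn.conj_mem y hy x) (inv_mem hy) (by simp [conj_pow, hyp])
    (by simp [hyp])

theorem commutator_pow_eq_one_of_quotient {H M : Subgroup G} [M.Normal]
    (hM : ∀ z, z ∈ M ↔ z ∈ H ∧ z ^ p = 1) (hquot : HasRegularTorsion p (G ⧸ M)) {k : ℕ} {x y : G}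
    (hxH : x ^ p ^ (k + 1) ∈ H) (hyH : y ^ p ^ k ∈ H) (hx : x ^ p ^ (k + 2) = 1)
    (hy : y ^ p ^ (k + 1) = 1) : ⁅y, x ^ p ^ k⁆ ^ p = 1 := by
  have hmk {z : G} {j : ℕ} (hzH : z ^ p ^ j ∈ H) (hz : z ^ p ^ (j + 1) = 1) :
      (z : G ⧸ M) ^ p ^ j = 1 :=
    (QuotientGroup.eq_one_iff _).mpr ((hM _).mpr ⟨hzH, by rw [← pow_mul, ← pow_succ, hz]⟩)
  exact ((hM _).mp (commutatorElement_mem_iff_commute_mk.mpr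
    (hquot.commute_pow k x y (hmk hxH hx) (hmk hyH hy)))).2

end HasRegularTorsion

namespace IsPowerful

variable [Fact p.Prime] {G : Type u} [Group G] [Finite G]

theorem mul_pow_eq_one_of_commute_pow (hp2 : p ≠ 2) (hG : IsPGroup p G) (hpow : IsPowerful p G)
    (hcomm : ∀ x y : G, y ^ p = 1 → ⁅x, y⁆ ^ p = 1)
    (hS : ∀ x y : G, x ^ p ^ 2 = 1 → y ^ p = 1 → Commute y (x ^ p)) {x y : G}
    (hx : x ^ p = 1) (hy : y ^ p = 1) : (x * y) ^ p = 1 := by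
  have htop := (isPowerful_iff_isPowerfullyEmbedded_top hp2).mp hpow
  obtain ⟨d, -, hd⟩ := htop.exists_pow_eq hp2 hG (htop.commutator_mem_left (Subgroup.mem_top y) x)
  have hyx : ⁅y, x⁆ ^ p = 1 := hcomm y x hx
  have hd2 : d ^ p ^ 2 = 1 := by rw [pow_two, pow_mul, hd, hyx]
  have hcentral {z : G} (hz : z ^ p = 1) : Commute ⁅y, x⁆ z := hd ▸ (hS d z hd2 hz).symm
  rw [mul_pow_prime_of_commute_commutator hp2 (hcentral hy) (hcentral hx) hyx, hx, hy, one_mul]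

theorem commute_pow_of_commute_pow_succ (hp2 : p ≠ 2) (hG : IsPGroup p G)
    (hpow : IsPowerful p G) (hcomm : ∀ x y : G, y ^ p = 1 → ⁅x, y⁆ ^ p = 1) {m : ℕ}
    (hS : ∀ x y : G, x ^ p ^ (m + 3) = 1 → y ^ p ^ (m + 2) = 1 → Commute y (x ^ p ^ (m + 2)))
    {x y : G} (hx : x ^ p ^ (m + 2) = 1) (hyx : ⁅y, x ^ p ^ m⁆ ^ p = 1) :
    Commute y (x ^ p ^ (m + 1)) := by
  have htop := (isPowerful_iff_isPowerfullyEmbedded_top hp2).mp hpow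
  rw [pow_succ, pow_mul]
  set X := x ^ p ^ m with hX
  have hw : ⁅X, ⁅y, X⁆⁆ ^ p = 1 := hcomm _ _ hyx
  obtain ⟨g, -, hg⟩ : ∃ g ∈ (⊤ : Subgroup G), g ^ p ^ (m + 2) = ⁅X, ⁅y, X⁆⁆ :=
    htop.exists_prime_pow_eq hp2 hG <| htop.commutator_mem_subgroupPow hp2 hG
      (htop.commutator_mem_subgroupPow hp2 hG (pow_mem_subgroupPow (Subgroup.mem_top x)) y) X
  have hgp : g ^ p ^ (m + 3) = 1 := by rw [pow_succ, pow_mul, hg, hw]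
  have hcentral {z : G} (hz : z ^ p ^ (m + 2) = 1) : Commute ⁅X, ⁅y, X⁆⁆ z :=
    hg ▸ (hS g z hgp hz).symm
  refine commute_pow_prime_of_commutator_pow_eq_one hp2 (hcentral ?_) (hcentral ?_) hw hyx
  · rw [hX, ← pow_mul, mul_comm, pow_mul, hx, one_pow]
  · rw [pow_succ', pow_mul, hyx, one_pow]

theorem commute_pow_of_commutator_pow_eq_one (hp2 : p ≠ 2) (hG : IsPGroup p G)
    (hpow : IsPowerful p G) (hcomm : ∀ x y : G, y ^ p = 1 → ⁅x, y⁆ ^ p = 1)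
    (hcommPow : ∀ (m : ℕ) (x y : G), x ^ p ^ (m + 2) = 1 → y ^ p ^ (m + 1) = 1 →
      ⁅y, x ^ p ^ m⁆ ^ p = 1)
    (k : ℕ) : ∀ x y : G, x ^ p ^ (k + 2) = 1 → y ^ p ^ (k + 1) = 1 →
      Commute y (x ^ p ^ (k + 1)) := by
  obtain ⟨N, hN⟩ := IsPGroup.iff_card.mp hG
  refine Nat.decreasingInduction
    (motive := fun k _ => ∀ x y : G, x ^ p ^ (k + 2) = 1 → y ^ p ^ (k + 1) = 1 →
      Commute y (x ^ p ^ (k + 1)))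
    (fun m _ hS x y hx hy => hpow.commute_pow_of_commute_pow_succ hp2 hG hcomm hS hx
      (hcommPow m x y hx hy)) (fun x y _ _ => ?_) (Nat.le_add_left k N)
  rw [add_assoc, pow_add, pow_mul, ← hN, pow_card_eq_one', one_pow]
  exact Commute.one_right y

theorem hasRegularTorsion (hp2 : p ≠ 2) (hG : IsPGroup p G) (hpow : IsPowerful p G) :
    HasRegularTorsion p G := by
  refine IsPowerful.induction hp2 (C := fun G _ => HasRegularTorsion p G)
    (fun G _ _ => .of_isMulCommutative) (fun G _ _ hG hpow hab hsub hquot => ?_) G hG hpow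
  set P := subgroupPow (⊤ : Subgroup G) p
  have hGP : commutator G ≤ P := (isPowerful_iff_isPowerfullyEmbedded_top hp2).mp hpow
  have hcomm (x y : G) (hy : y ^ p = 1) : ⁅x, y⁆ ^ p = 1 := by
    have : (Subgroup.zpowers y ⊔ P).Normal := .of_commutator_le G (hGP.trans le_sup_right)
    exact (hsub y).commutator_pow_eq_one (Subgroup.mem_sup_left (Subgroup.mem_zpowers y)) hy x
  have hPbot : P ≠ ⊥ := fun hbot => hab <| (commutator_eq_bot_iff G).mp <|
    le_bot_iff.mp (hbot ▸ hGP)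
  have hM (z : G) : z ∈ omegaSubgroup p 1 P ↔ z ∈ P ∧ z ^ p = 1 := by
    rw [mem_omegaSubgroup_iff, pow_one]
    simp only [pow_one]
    exact fun a ha b hb =>
      (hsub 1).mul_pow_eq_one_of_mem (Subgroup.mem_sup_right ha) (Subgroup.mem_sup_right hb)
  have hP (z : G) (j : ℕ) : z ^ p ^ (j + 1) ∈ P := by
    rw [pow_succ, pow_mul]
    exact pow_mem_subgroupPow (Subgroup.mem_top _)
  have hS := hpow.commute_pow_of_commutator_pow_eq_one hp2 hG hcomm fun m x y hx hy => by
    rcases m with _ | m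
    · rw [← commutatorElement_inv, inv_pow, hcomm _ _ (by simpa using hy), inv_one]
    · exact (hquot _ (omegaSubgroup_one_ne_bot hG hPbot)).commutator_pow_eq_one_of_quotient hM
        (hP x _) (hP y _) hx hy
  refine ⟨fun x y => hpow.mul_pow_eq_one_of_commute_pow hp2 hG hcomm (by simpa using hS 0), ?_⟩
  rintro (_ | k) x y hx hy
  · rw [show y = 1 by simpa using hy]
    exact Commute.one_left _
  · exact hS k x y hx hy

end IsPowerful

end RegularTorsion

/-! ### Elements of order dividing `p ^ i` -/

section Omega

variable {p : ℕ}

theorem HasRegularTorsion.mk_pow_eq_one_iff {G : Type*} [Group G] (h : HasRegularTorsion p G)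
    {x : G} {i : ℕ} :
    (x : G ⧸ omegaSubgroup p 1 (⊤ : Subgroup G)) ^ p ^ i = 1 ↔ x ^ p ^ (i + 1) = 1 := by
  have hmul : ∀ a ∈ (⊤ : Subgroup G), ∀ b ∈ (⊤ : Subgroup G),
      a ^ p ^ 1 = 1 → b ^ p ^ 1 = 1 → (a * b) ^ p ^ 1 = 1 := by
    simpa using h.mul_pow_eq_one
  rw [← QuotientGroup.mk_pow, QuotientGroup.eq_one_iff, mem_omegaSubgroup_iff hmul, ← pow_mul,
    ← pow_add]
  exact and_iff_right (Subgroup.mem_top _)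

variable [Fact p.Prime] {G : Type u} [Group G] [Finite G]

theorem IsPowerful.mul_prime_pow_eq_one (hp2 : p ≠ 2) (hG : IsPGroup p G) (hpow : IsPowerful p G)
    {i : ℕ} {x y : G} (hx : x ^ p ^ i = 1) (hy : y ^ p ^ i = 1) : (x * y) ^ p ^ i = 1 := by
  induction i generalizing G with
  | zero => simp_all
  | succ i ih =>
    have h := hpow.hasRegularTorsion hp2 hG
    rw [← h.mk_pow_eq_one_iff] at hx hy ⊢
    exact ih (hG.to_quotient _)
      (hpow.of_surjective hp2 _ (QuotientGroup.mk'_surjective _)) hx hy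

theorem IsPowerful.commutator_prime_pow_eq_one (hp2 : p ≠ 2) (hG : IsPGroup p G)
    (hpow : IsPowerful p G) {i : ℕ} {x y : G} (hx : x ^ p ^ (i + 2) = 1)
    (hy : y ^ p ^ (i + 1) = 1) : ⁅x ^ p, y⁆ ^ p ^ i = 1 := by
  have h := hpow.hasRegularTorsion hp2 hG
  induction i generalizing G with
  | zero =>
    have hxy : Commute y (x ^ p ^ 1) := h.commute_pow 1 x y hx hy
    rw [pow_one] at hxy
    rw [hxy.symm.commutator_eq, one_pow]
  | succ i ih =>
    have hquot := hpow.of_surjective hp2 _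
      (QuotientGroup.mk'_surjective (omegaSubgroup p 1 (⊤ : Subgroup G)))
    rw [← h.mk_pow_eq_one_iff] at hy ⊢
    rw [show i + 1 + 2 = i + 2 + 1 from rfl, ← h.mk_pow_eq_one_iff] at hx
    exact ih (hG.to_quotient _) hquot hx hy (hquot.hasRegularTorsion hp2 (hG.to_quotient _))

theorem IsPowerful.pow_eq_one_of_mem_omegaSubgroup (hp2 : p ≠ 2) (hG : IsPGroup p G)
    (hpow : IsPowerful p G) {H : Subgroup G} {i : ℕ} {x : G} (hx : x ∈ omegaSubgroup p i H) :
    x ^ p ^ i = 1 :=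
  ((mem_omegaSubgroup_iff fun _ _ _ _ => hpow.mul_prime_pow_eq_one hp2 hG).mp hx).2

theorem omega_statement_4_general (hp2 : p ≠ 2) (hG : IsPGroup p G)
    (hpow : IsPowerful p G) {N : Subgroup G} (hN : IsPowerfullyEmbedded p N)
    (hNG : N ≤ subgroupPow ⊤ p) (i : ℕ) : IsPowerful p (omegaSubgroup p i N) := by
  rw [isPowerful_subgroup_iff hp2, Subgroup.commutator_le]
  intro x hx y hy
  have hxi := hpow.pow_eq_one_of_mem_omegaSubgroup hp2 hG hx
  have hyi := hpow.pow_eq_one_of_mem_omegaSubgroup hp2 hG hy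
  rcases i with _ | i
  · rw [show x = 1 by simpa using hxi, commutatorElement_one_left]
    exact one_mem _
  have hxN : x ∈ N := omegaSubgroup_le hx
  obtain ⟨a, rfl⟩ := hpow.exists_pow_eq hp2 hG x (hNG hxN)
  have ha : a ^ p ^ (i + 2) = 1 := by rw [pow_succ', pow_mul, hxi]
  obtain ⟨g, hg, hgp⟩ := hN.exists_pow_eq hp2 hG (hN.commutator_mem_left hxN y)
  have hgi : g ^ p ^ (i + 1) = 1 := by
    rw [pow_succ', pow_mul, hgp, hpow.commutator_prime_pow_eq_one hp2 hG ha hyi]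
  exact hgp ▸ pow_mem_subgroupPow (mem_omegaSubgroup_of_pow_eq_one hg hgi)

end Omega

theorem omega_statement_4 (p : ℕ) (hp : p.Prime) (hp2 : p ≠ 2) (G : Type*) [Group G]
    [Finite G] (hG : IsPGroup p G) (hpow : IsPowerful p G) (i : ℕ) (hi : 1 ≤ i) :
    IsPowerful p
      (↥(omegaSubgroup p i (subgroupPow (⊤ : Subgroup G) p)) ⧸
        subgroupPow (⊤ : Subgroup ↥(omegaSubgroup p i (subgroupPow (⊤ : Subgroup G) p)))
          (p ^ 2)) := by
  have := Fact.mk hp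
  have := hG.isNilpotent
  have htop := (isPowerful_iff_isPowerfullyEmbedded_top hp2).mp hpow
  exact (omega_statement_4_general hp2 hG hpow (htop.pow hp2) le_rfl i).of_surjective hp2 _
    (QuotientGroup.mk'_surjective _)
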